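/- Let b ≥ 1/2, T̃ > 0, let y : [0,T̃] → (0,∞) be continuously differentiable and let Ψ : [0,T̃] → ℝ be continuous. With the Bessel heat kernel q_s(z,ζ,b) = (√(zζ)/s)·(ζ/z)^b·exp(−(z²+ζ²)/(2s))·I_{b−1/2}(zζ/s), define for τ ∈ (0,T̃] and z > 0 with z ≠ y(τ) the Bessel potential q(τ,z) = ∫_0^τ Ψ(k)·[∂q_{τ−k}(z,ζ,b)/∂ζ]|_{ζ=y(k)} dk. Then the improper integral ∫_0^τ Ψ(k)·[∂q_{τ−k}(y(τ),ζ,b)/∂ζ]|_{ζ=y(k)} dk converges, and the one-sided limit of q(τ,z) as z → y(τ) from above satisfies lim_{z→y(τ)⁺} q(τ,z) = Ψ(τ) + ∫_0^τ Ψ(k)·[∂q_{τ−k}(y(τ),ζ,b)/∂ζ]|_{ζ=y(k)} dk. -/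

import Mathlib

/-- Modified Bessel function of the first kind,
`I_ν(x) = Σ_{k=0}^∞ (x/2)^{2k+ν}/(k!·Γ(k+ν+1))`. -/
noncomputable def besselI (ν x : ℝ) : ℝ :=
  ∑' k : ℕ, (x / 2) ^ (2 * (k : ℝ) + ν) / ((Nat.factorial k : ℝ) * Real.Gamma ((k : ℝ) + ν + 1))

/-- Bessel heat kernel
`q_s(z,ζ,b) = (√(zζ)/s)·(ζ/z)^b·exp(−(z²+ζ²)/(2s))·I_{b−1/2}(zζ/s)`. -/
noncomputable def besselKernel (b s z ζ : ℝ) : ℝ :=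
  Real.sqrt (z * ζ) / s * (ζ / z) ^ b * Real.exp (-(z ^ 2 + ζ ^ 2) / (2 * s)) *
    besselI (b - 1 / 2) (z * ζ / s)

open MeasureTheory Set Filter Topology

/-- Watson-type integral. -/
noncomputable def watsonF (p r x : ℝ) : ℝ :=
  ∫ u in Ioo (0 : ℝ) 2, u ^ (p - 1) * (2 - u) ^ (r - 1) * Real.exp (-x * u)

/-- bound of `v^(r-1)` on `[1,2]` -/
noncomputable def watsonC (r : ℝ) : ℝ := 1 + (2 : ℝ) ^ (r - 1)

lemma watsonC_pos (r : ℝ) : 0 < watsonC r := by unfold watsonC; positivity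

lemma rpow_le_watsonC (r v : ℝ) (h1 : 1 ≤ v) (h2 : v ≤ 2) : v ^ (r - 1) ≤ watsonC r := by
  unfold watsonC
  have h2' : (0 : ℝ) < 2 ^ (r - 1) := by positivity
  rcases le_total 0 (r - 1) with h | h
  · have := Real.rpow_le_rpow (by linarith) h2 h
    linarith
  · have := Real.rpow_le_one_of_one_le_of_nonpos h1 h
    linarith

lemma watson_pointwise (p r x u : ℝ) (hx : 0 ≤ x) (hu : u ∈ Ioo (0 : ℝ) 2) :
    u ^ (p - 1) * (2 - u) ^ (r - 1) * Real.exp (-x * u) ≤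
      watsonC r * (u ^ (p - 1) * Real.exp (-x * u)) +
        watsonC p * Real.exp (-x) * (2 - u) ^ (r - 1) := by
  obtain ⟨h0, h2⟩ := hu
  have a1 : 0 < u ^ (p - 1) := Real.rpow_pos_of_pos h0 _
  have a2 : 0 < (2 - u) ^ (r - 1) := Real.rpow_pos_of_pos (by linarith) _
  have a3 := Real.exp_pos (-x * u)
  have a4 := Real.exp_pos (-x)
  have c1 := watsonC_pos r
  have c2 := watsonC_pos p
  rcases le_total u 1 with h | h
  · have := rpow_le_watsonC r (2 - u) (by linarith) (by linarith)
    have k : u ^ (p - 1) * (2 - u) ^ (r - 1) * Real.exp (-x * u) ≤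
      watsonC r * (u ^ (p - 1) * Real.exp (-x * u)) := by
      calc _ = (2 - u) ^ (r - 1) * (u ^ (p - 1) * Real.exp (-x * u)) := by ring
        _ ≤ _ := by gcongr
    have : 0 ≤ watsonC p * Real.exp (-x) * (2 - u) ^ (r - 1) := by positivity
    linarith
  · have h3 := rpow_le_watsonC p u h h2.le
    have h4 : Real.exp (-x * u) ≤ Real.exp (-x) := by
      apply Real.exp_le_exp.mpr; nlinarith
    have k : u ^ (p - 1) * (2 - u) ^ (r - 1) * Real.exp (-x * u) ≤
      watsonC p * Real.exp (-x) * (2 - u) ^ (r - 1) := by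
      calc _ = u ^ (p - 1) * Real.exp (-x * u) * (2 - u) ^ (r - 1) := by ring
        _ ≤ _ := by gcongr
    have : 0 ≤ watsonC r * (u ^ (p - 1) * Real.exp (-x * u)) := by positivity
    linarith

lemma gamma_integrable {p x : ℝ} (hp : 0 < p) (hx : 0 < x) :
    IntegrableOn (fun u : ℝ => u ^ (p - 1) * Real.exp (-x * u)) (Ioi 0) := by
  have := integrableOn_rpow_mul_exp_neg_mul_rpow (p := 1) (s := p - 1) (b := x)
    (by linarith) (by norm_num) hx
  simpa using this

lemma gamma_integral {p x : ℝ} (hp : 0 < p) (hx : 0 < x) :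
    ∫ u in Ioi (0 : ℝ), u ^ (p - 1) * Real.exp (-x * u) = Real.Gamma p * x ^ (-p) := by
  have := Real.integral_rpow_mul_exp_neg_mul_Ioi hp hx
  simp only [neg_mul]
  rw [this, one_div, Real.inv_rpow hx.le, Real.rpow_neg hx.le, mul_comm]

lemma left_integrable {p : ℝ} (hp : 0 < p) :
    IntegrableOn (fun u : ℝ => u ^ (p - 1)) (Ioo 0 2) := by
  have := (intervalIntegral.intervalIntegrable_rpow' (a := 0) (b := 2) (r := p - 1) (by linarith))
  rw [intervalIntegrable_iff_integrableOn_Ioo_of_le (by norm_num)] at this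
  exact this

lemma right_integrable {r : ℝ} (hr : 0 < r) :
    IntegrableOn (fun u : ℝ => (2 - u) ^ (r - 1)) (Ioo 0 2) := by
  have := (intervalIntegral.intervalIntegrable_rpow' (a := 0) (b := 2) (r := r - 1) (by linarith))
  have := (this.comp_sub_left 2).symm
  norm_num at this
  rw [intervalIntegrable_iff_integrableOn_Ioo_of_le (by norm_num)] at this
  exact this

lemma watson_meas (p r x : ℝ) : AEStronglyMeasurable
    (fun u : ℝ => u ^ (p - 1) * (2 - u) ^ (r - 1) * Real.exp (-x * u))
      (volume.restrict (Ioo 0 2)) := by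
  apply Measurable.aestronglyMeasurable
  fun_prop

lemma watson_integrable0 {p r : ℝ} (hp : 0 < p) (hr : 0 < r) :
    IntegrableOn (fun u : ℝ => u ^ (p - 1) * (2 - u) ^ (r - 1)) (Ioo 0 2) := by
  have hg : IntegrableOn (fun u : ℝ => watsonC r * u ^ (p - 1) +
      watsonC p * (2 - u) ^ (r - 1)) (Ioo 0 2) :=
    ((left_integrable hp).const_mul _).add ((right_integrable hr).const_mul _)
  refine Integrable.mono' hg (by simpa using watson_meas p r 0) ?_
  filter_upwards [ae_restrict_mem measurableSet_Ioo] with u hu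
  have h1 : 0 < u ^ (p - 1) := Real.rpow_pos_of_pos hu.1 _
  have h2 : 0 < (2 - u) ^ (r - 1) := Real.rpow_pos_of_pos (by linarith [hu.2]) _
  rw [Real.norm_of_nonneg (by positivity)]
  simpa using watson_pointwise p r 0 u le_rfl hu

lemma watson_integrable {p r : ℝ} (hp : 0 < p) (hr : 0 < r) (x : ℝ) :
    IntegrableOn (fun u : ℝ => u ^ (p - 1) * (2 - u) ^ (r - 1) * Real.exp (-x * u)) (Ioo 0 2) := by
  refine Integrable.mono' ((watson_integrable0 hp hr).const_mul (Real.exp (2 * |x|)))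
    (watson_meas p r x) ?_
  filter_upwards [ae_restrict_mem measurableSet_Ioo] with u hu
  have h1 : 0 < u ^ (p - 1) := Real.rpow_pos_of_pos hu.1 _
  have h2 : 0 < (2 - u) ^ (r - 1) := Real.rpow_pos_of_pos (by linarith [hu.2]) _
  rw [Real.norm_of_nonneg (by positivity), mul_comm]
  refine mul_le_mul_of_nonneg_right (Real.exp_le_exp.mpr ?_) (by positivity)
  rcases abs_cases x with h | h <;> nlinarith [hu.1, hu.2]

lemma rpow_mul_exp_le {p x : ℝ} (hp : 0 < p) (hx : 0 < x) :
    Real.exp (-x) ≤ p ^ p * x ^ (-p) := by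
  have h1 : x / p ≤ Real.exp (x / p) := by linarith [Real.add_one_le_exp (x / p)]
  have h2 : (x / p) ^ p ≤ Real.exp x := by
    calc (x / p) ^ p ≤ (Real.exp (x / p)) ^ p := by gcongr
      _ = Real.exp x := by rw [← Real.exp_mul]; congr 1; field_simp
  rw [Real.div_rpow hx.le hp.le] at h2
  have hpp : 0 < p ^ p := Real.rpow_pos_of_pos hp _
  have hxp : 0 < x ^ p := Real.rpow_pos_of_pos hx _
  rw [Real.exp_neg, Real.rpow_neg hx.le, ← div_eq_mul_inv, inv_eq_one_div, div_le_div_iff₀ (Real.exp_pos _) hxp]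
  rw [div_le_iff₀ hpp] at h2
  linarith

lemma watsonF_nonneg (p r x : ℝ) : 0 ≤ watsonF p r x := by
  unfold watsonF
  apply setIntegral_nonneg measurableSet_Ioo
  intro u hu
  have h1 : 0 < u ^ (p - 1) := Real.rpow_pos_of_pos hu.1 _
  have h2 : 0 < (2 - u) ^ (r - 1) := Real.rpow_pos_of_pos (by linarith [hu.2]) _
  positivity

lemma watsonF_bound {p r : ℝ} (hp : 0 < p) (hr : 0 < r) :
    ∃ C, 0 < C ∧ ∀ x, 0 < x → watsonF p r x ≤ C * x ^ (-p) := by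
  set R := ∫ u in Ioo (0 : ℝ) 2, (2 - u) ^ (r - 1) with hR
  have hR0 : 0 ≤ R := by
    apply setIntegral_nonneg measurableSet_Ioo
    intro u hu
    exact Real.rpow_nonneg (by linarith [hu.2]) _
  have hG := Real.Gamma_pos_of_pos hp
  have c1 := watsonC_pos r
  have c2 := watsonC_pos p
  have hpp : 0 < p ^ p := Real.rpow_pos_of_pos hp _
  refine ⟨watsonC r * Real.Gamma p + watsonC p * p ^ p * R, by positivity, fun x hx => ?_⟩
  have hg1 : IntegrableOn (fun u : ℝ => u ^ (p - 1) * Real.exp (-x * u)) (Ioo 0 2) :=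
    (gamma_integrable hp hx).mono_set Ioo_subset_Ioi_self
  have e1 : ∫ u in Ioo (0 : ℝ) 2, u ^ (p - 1) * Real.exp (-x * u) ≤ Real.Gamma p * x ^ (-p) := by
    rw [← gamma_integral hp hx]
    apply setIntegral_mono_set (gamma_integrable hp hx)
    · filter_upwards [ae_restrict_mem measurableSet_Ioi] with u hu
      have := Real.rpow_nonneg (le_of_lt hu) (p - 1)
      simp only [Pi.zero_apply]
      positivity
    · exact Ioo_subset_Ioi_self.eventuallyLE
  have e2 : watsonF p r x ≤ watsonC r * (∫ u in Ioo (0 : ℝ) 2, u ^ (p - 1) * Real.exp (-x * u)) +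
      watsonC p * Real.exp (-x) * R := by
    rw [hR, ← integral_const_mul, ← integral_const_mul, ← integral_add]
    · apply setIntegral_mono_on (watson_integrable hp hr x)
      · exact (hg1.const_mul _).add ((right_integrable hr).const_mul _)
      · exact measurableSet_Ioo
      · intro u hu
        exact watson_pointwise p r x u hx.le hu
    · exact hg1.const_mul _
    · exact (right_integrable hr).const_mul _
  have e3 := rpow_mul_exp_le hp hx
  calc _ ≤ _ := e2
    _ ≤ watsonC r * (Real.Gamma p * x ^ (-p)) + watsonC p * (p ^ p * x ^ (-p)) * R := by gcongr
    _ = _ := by ring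

lemma watsonF_hasDerivAt {p r : ℝ} (hp : 0 < p) (hr : 0 < r) (x : ℝ) :
    HasDerivAt (watsonF p r) (-watsonF (p + 1) r x) x := by
  have key := hasDerivAt_integral_of_dominated_loc_of_deriv_le (μ := volume.restrict (Ioo (0:ℝ) 2))
    (F := fun x u => u ^ (p - 1) * (2 - u) ^ (r - 1) * Real.exp (-x * u))
    (F' := fun x u => -(u ^ (p + 1 - 1) * (2 - u) ^ (r - 1) * Real.exp (-x * u)))
    (x₀ := x) (s := Metric.ball x 1)
    (bound := fun u => u ^ (p + 1 - 1) * (2 - u) ^ (r - 1) * Real.exp (2 * (|x| + 1)))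
    (Metric.ball_mem_nhds x one_pos)
    (Eventually.of_forall fun x => watson_meas p r x) (watson_integrable hp hr x)
    (watson_meas (p + 1) r x).neg ?_ ?_ ?_
  · have := key.2
    rw [integral_neg] at this
    exact this
  · filter_upwards [ae_restrict_mem measurableSet_Ioo] with u hu z hz
    have h1 : 0 < u ^ (p + 1 - 1) := Real.rpow_pos_of_pos hu.1 _
    have h2 : 0 < (2 - u) ^ (r - 1) := Real.rpow_pos_of_pos (by linarith [hu.2]) _
    rw [norm_neg, Real.norm_of_nonneg (by positivity)]
    refine mul_le_mul_of_nonneg_left (Real.exp_le_exp.mpr ?_) (by positivity)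
    rw [Metric.mem_ball, Real.dist_eq] at hz
    have h3 : -z ≤ |x| + 1 := by
      have := abs_lt.mp hz
      have := neg_abs_le x
      linarith
    have : 0 ≤ |x| := abs_nonneg x
    nlinarith [hu.1, hu.2]
  · exact (watson_integrable0 (by linarith) hr).mul_const _
  · filter_upwards [ae_restrict_mem measurableSet_Ioo] with u hu z hz
    have h1 : u ^ (p + 1 - 1) = u ^ (p - 1) * u := by
      rw [← Real.rpow_add_one hu.1.ne']; ring_nf
    have : HasDerivAt (fun z : ℝ => -z * u) (-1 * u) z := (hasDerivAt_id z).neg.mul_const u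
    have := this.exp.const_mul (u ^ (p - 1) * (2 - u) ^ (r - 1))
    refine this.congr_deriv ?_
    rw [h1]; ring

lemma rpow_sub_bound (r : ℝ) :
    ∃ C, 0 < C ∧ ∀ u ∈ Ioo (0 : ℝ) 2,
      |(2 - u) ^ (r - 1) - 2 ^ (r - 1)| ≤ C * (u + u * (2 - u) ^ (r - 1)) := by
  set D := |r - 1| * watsonC (r - 1) with hD
  have hD0 : 0 ≤ D := mul_nonneg (abs_nonneg _) (watsonC_pos _).le
  have h2 : (0 : ℝ) < 2 ^ (r - 1) := by positivity
  refine ⟨D + 1 + 2 ^ (r - 1), by positivity, fun u hu => ?_⟩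
  have h1 : 0 < (2 - u) ^ (r - 1) := Real.rpow_pos_of_pos (by linarith [hu.2]) _
  rcases le_total u 1 with h | h
  · have := Convex.norm_image_sub_le_of_norm_hasDerivWithin_le (s := Icc (1 : ℝ) 2)
      (f := fun v : ℝ => v ^ (r - 1)) (f' := fun v => (r - 1) * v ^ (r - 1 - 1)) (C := D)
      (x := 2) (y := 2 - u) ?_ ?_ (convex_Icc 1 2) ⟨by norm_num, by norm_num⟩
      ⟨by linarith, by linarith [hu.1]⟩
    · simp only [Real.norm_eq_abs] at this
      have e : |2 - u - 2| = u := by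
        rw [show 2 - u - 2 = -u by ring, abs_neg, abs_of_pos hu.1]
      rw [e] at this
      refine this.trans ?_
      have := hu.1
      have : 0 ≤ u * (2 - u) ^ (r - 1) := by positivity
      gcongr <;> linarith
    · intro v hv
      exact (Real.hasDerivAt_rpow_const (Or.inl (by linarith [hv.1]))).hasDerivWithinAt
    · intro v hv
      rw [norm_mul, Real.norm_eq_abs, Real.norm_of_nonneg (Real.rpow_nonneg (by linarith [hv.1]) _)]
      rw [hD]
      gcongr
      exact rpow_le_watsonC _ _ hv.1 hv.2
  · have : |(2 - u) ^ (r - 1) - 2 ^ (r - 1)| ≤ (2 - u) ^ (r - 1) + 2 ^ (r - 1) := by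
      rw [abs_le]; constructor <;> linarith
    refine this.trans ?_
    have k1 : (2 - u) ^ (r - 1) ≤ u * (2 - u) ^ (r - 1) := by nlinarith
    have k2 : (2 : ℝ) ^ (r - 1) ≤ 2 ^ (r - 1) * u := by nlinarith
    have k3 : 0 ≤ D * (u + u * (2 - u) ^ (r - 1)) := by positivity
    have k4 : 0 ≤ 2 ^ (r - 1) * (u * (2 - u) ^ (r - 1)) := by positivity
    nlinarith

lemma watsonF_asymp {p r : ℝ} (hp : 0 < p) (hr : 0 < r) :
    ∃ C, 0 < C ∧ ∀ x, 0 < x →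
      |watsonF p r x - 2 ^ (r - 1) * Real.Gamma p * x ^ (-p)| ≤ C * x ^ (-(p + 1)) := by
  obtain ⟨C1, hC1, h1⟩ := watsonF_bound (p := p + 1) (r := r) (by linarith) hr
  obtain ⟨C0, hC0, h0⟩ := watsonF_bound (p := p + 1) (r := 1) (by linarith) one_pos
  obtain ⟨K, hK, hk⟩ := rpow_sub_bound r
  have h2 : (0 : ℝ) < 2 ^ (r - 1) := by positivity
  have hG := Real.Gamma_pos_of_pos (show 0 < p + 1 by linarith)
  refine ⟨K * (C0 + C1) + 2 ^ (r - 1) * Real.Gamma (p + 1), by positivity, fun x hx => ?_⟩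
  have hI := gamma_integrable hp hx
  have hI' := gamma_integrable (show 0 < p + 1 by linarith) hx
  have hdisj : Disjoint (Ioo (0 : ℝ) 2) (Ici 2) := by
    rw [Set.disjoint_left]; intro u hu hu'; exact absurd hu.2 (not_lt.mpr hu')
  have hun : Ioi (0 : ℝ) = Ioo 0 2 ∪ Ici 2 := by
    rw [Ioo_union_Ici_eq_Ioi (by norm_num)]
  have split : Real.Gamma p * x ^ (-p) =
      (∫ u in Ioo (0 : ℝ) 2, u ^ (p - 1) * Real.exp (-x * u)) +
      ∫ u in Ici (2 : ℝ), u ^ (p - 1) * Real.exp (-x * u) := by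
    rw [← gamma_integral hp hx, hun]
    apply setIntegral_union hdisj measurableSet_Ici
    · exact hI.mono_set Ioo_subset_Ioi_self
    · exact hI.mono_set (Ici_subset_Ioi.mpr (by norm_num))
  have hmul : ∀ u : ℝ, 0 < u → u ^ (p + 1 - 1) = u ^ (p - 1) * u := fun u hu => by
      rw [← Real.rpow_add_one hu.ne']; ring_nf
  have tail0 : 0 ≤ ∫ u in Ici (2 : ℝ), u ^ (p - 1) * Real.exp (-x * u) := by
    apply setIntegral_nonneg measurableSet_Ici
    intro u hu
    have : (0 : ℝ) < u := lt_of_lt_of_le (by norm_num) (mem_Ici.mp hu)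
    have := Real.rpow_pos_of_pos this (p - 1)
    positivity
  have tail : ∫ u in Ici (2 : ℝ), u ^ (p - 1) * Real.exp (-x * u) ≤
      Real.Gamma (p + 1) * x ^ (-(p + 1)) := by
    rw [← gamma_integral (show 0 < p + 1 by linarith) hx]
    calc _ ≤ ∫ u in Ici (2 : ℝ), u ^ (p + 1 - 1) * Real.exp (-x * u) := by
          apply setIntegral_mono_on (hI.mono_set (Ici_subset_Ioi.mpr (by norm_num)))
            (hI'.mono_set (Ici_subset_Ioi.mpr (by norm_num))) measurableSet_Ici
          intro u hu
          have hu' : (2 : ℝ) ≤ u := hu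
          have := Real.rpow_pos_of_pos (show 0 < u by linarith) (p - 1)
          rw [hmul u (by linarith)]
          gcongr
          nlinarith
      _ ≤ _ := by
          apply setIntegral_mono_set hI'
          · filter_upwards [ae_restrict_mem measurableSet_Ioi] with u hu
            have := Real.rpow_nonneg (le_of_lt hu) (p + 1 - 1)
            simp only [Pi.zero_apply]
            positivity
          · exact (Ici_subset_Ioi.mpr (by norm_num : (0:ℝ) < 2)).eventuallyLE
  have main : |watsonF p r x - 2 ^ (r - 1) *
      ∫ u in Ioo (0 : ℝ) 2, u ^ (p - 1) * Real.exp (-x * u)| ≤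
      K * (watsonF (p + 1) 1 x + watsonF (p + 1) r x) := by
    unfold watsonF
    rw [← integral_const_mul, ← integral_sub (watson_integrable hp hr x)
      ((hI.mono_set Ioo_subset_Ioi_self).const_mul _),
      ← integral_add (watson_integrable (by linarith) one_pos x)
        (watson_integrable (by linarith) hr x), ← integral_const_mul, ← Real.norm_eq_abs]
    apply norm_integral_le_of_norm_le
    · exact ((watson_integrable (by linarith) one_pos x).add
        (watson_integrable (by linarith) hr x)).const_mul _
    · filter_upwards [ae_restrict_mem measurableSet_Ioo] with u hu
      have a1 := Real.rpow_pos_of_pos hu.1 (p - 1)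
      have e : u ^ (p - 1) * (2 - u) ^ (r - 1) * Real.exp (-x * u) -
        2 ^ (r - 1) * (u ^ (p - 1) * Real.exp (-x * u)) =
        (u ^ (p - 1) * Real.exp (-x * u)) * ((2 - u) ^ (r - 1) - 2 ^ (r - 1)) := by ring
      rw [e, norm_mul, Real.norm_of_nonneg (by positivity), Real.norm_eq_abs]
      calc _ ≤ (u ^ (p - 1) * Real.exp (-x * u)) * (K * (u + u * (2 - u) ^ (r - 1))) := by
            gcongr
            exact hk u hu
        _ = _ := by
            rw [hmul u hu.1]; simp only [sub_self, Real.rpow_zero]; ring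
  have e : watsonF p r x - 2 ^ (r - 1) * Real.Gamma p * x ^ (-p) =
      (watsonF p r x - 2 ^ (r - 1) * ∫ u in Ioo (0 : ℝ) 2, u ^ (p - 1) * Real.exp (-x * u)) -
      2 ^ (r - 1) * ∫ u in Ici (2 : ℝ), u ^ (p - 1) * Real.exp (-x * u) := by
    rw [mul_assoc, split]; ring
  rw [e]
  refine (abs_sub _ _).trans ?_
  rw [abs_of_nonneg (mul_nonneg h2.le tail0)]
  calc _ ≤ K * (C0 * x ^ (-(p + 1)) + C1 * x ^ (-(p + 1))) +
        2 ^ (r - 1) * (Real.Gamma (p + 1) * x ^ (-(p + 1))) := by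
        gcongr
        refine main.trans ?_
        gcongr
        · exact h0 x hx
        · exact h1 x hx
    _ = _ := by ring
lemma real_beta_integral {α β : ℝ} (hα : 0 < α) (hβ : 0 < β) :
    ∫ w in Ioo (0 : ℝ) 1, w ^ (α - 1) * (1 - w) ^ (β - 1) =
      Real.Gamma α * Real.Gamma β / Real.Gamma (α + β) := by
  have h := ProbabilityTheory.beta_eq_betaIntegralReal α β hα hβ
  unfold ProbabilityTheory.beta at h
  rw [h, Complex.betaIntegral, ← integral_Ioc_eq_integral_Ioo,
    ← intervalIntegral.integral_of_le zero_le_one]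
  have : ∫ x in (0 : ℝ)..1, (x : ℂ) ^ ((α : ℂ) - 1) * (1 - (x : ℂ)) ^ ((β : ℂ) - 1) =
      ((∫ x in (0 : ℝ)..1, x ^ (α - 1) * (1 - x) ^ (β - 1) : ℝ) : ℂ) := by
    rw [← intervalIntegral.integral_ofReal]
    apply intervalIntegral.integral_congr
    intro x hx
    rw [uIcc_of_le zero_le_one] at hx
    simp only
    push_cast
    rw [Complex.ofReal_cpow hx.1, Complex.ofReal_cpow (by linarith [hx.2])]
    push_cast
    rfl
  rw [this, Complex.ofReal_re]

lemma real_beta_integrable {α β : ℝ} (hα : 0 < α) (hβ : 0 < β) :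
    IntegrableOn (fun w : ℝ => w ^ (α - 1) * (1 - w) ^ (β - 1)) (Ioo 0 1) := by
  by_contra h
  have h1 := real_beta_integral hα hβ
  rw [integral_undef h] at h1
  have := Real.Gamma_pos_of_pos hα
  have := Real.Gamma_pos_of_pos hβ
  have := Real.Gamma_pos_of_pos (add_pos hα hβ)
  have : 0 < Real.Gamma α * Real.Gamma β / Real.Gamma (α + β) := by positivity
  linarith

lemma gamma_dup (k : ℕ) : Real.Gamma ((k : ℝ) + 1 / 2) / ((2 * k).factorial : ℝ) =
    Real.sqrt Real.pi * (1 / 2) ^ (2 * k) / (k.factorial : ℝ) := by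
  have h := Real.Gamma_mul_Gamma_add_half ((k : ℝ) + 1 / 2)
  have e1 : (k : ℝ) + 1 / 2 + 1 / 2 = k + 1 := by ring
  have e2 : 2 * ((k : ℝ) + 1 / 2) = ((2 * k : ℕ) : ℝ) + 1 := by push_cast; ring
  have e3 : (1 : ℝ) - 2 * ((k : ℝ) + 1 / 2) = -((2 * k : ℕ) : ℝ) := by push_cast; ring
  rw [e3, e1, e2, Real.Gamma_nat_eq_factorial, Real.Gamma_nat_eq_factorial,
    Real.rpow_neg (by norm_num), Real.rpow_natCast] at h
  have f1 : (0 : ℝ) < k.factorial := by positivity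
  have f2 : (0 : ℝ) < (2 * k).factorial := by positivity
  rw [div_eq_div_iff f2.ne' f1.ne', h, one_div, inv_pow]
  ring

lemma cosh_integral {b x : ℝ} (hb : 0 < b) :
    HasSum (fun k : ℕ => (x / 2) ^ (2 * k) * (Real.sqrt Real.pi * Real.Gamma b) /
        ((k.factorial : ℝ) * Real.Gamma ((k : ℝ) + (b - 1 / 2) + 1)))
      (∫ w in Ioo (0 : ℝ) 1, w ^ (-(1 / 2) : ℝ) * (1 - w) ^ (b - 1) * Real.cosh (x * Real.sqrt w)) := by
  have hterm : ∀ k : ℕ, ∀ w ∈ Ioo (0 : ℝ) 1,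
      w ^ (-(1 / 2) : ℝ) * (1 - w) ^ (b - 1) * ((x * Real.sqrt w) ^ (2 * k) / ((2 * k).factorial : ℝ))
      = (x ^ (2 * k) / ((2 * k).factorial : ℝ)) *
        (w ^ ((k : ℝ) + 1 / 2 - 1) * (1 - w) ^ (b - 1)) := by
    intro k w hw
    have e : w ^ ((k : ℝ) + 1 / 2 - 1) = w ^ (-(1 / 2) : ℝ) * w ^ k := by
      rw [← Real.rpow_natCast w k, ← Real.rpow_add hw.1]; congr 1; ring
    rw [e, mul_pow, pow_mul (Real.sqrt w), Real.sq_sqrt hw.1.le]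
    ring
  have hval : ∀ k : ℕ, ∫ w in Ioo (0 : ℝ) 1,
      w ^ (-(1 / 2) : ℝ) * (1 - w) ^ (b - 1) * ((x * Real.sqrt w) ^ (2 * k) / ((2 * k).factorial : ℝ))
      = (x / 2) ^ (2 * k) * (Real.sqrt Real.pi * Real.Gamma b) /
        ((k.factorial : ℝ) * Real.Gamma ((k : ℝ) + (b - 1 / 2) + 1)) := by
    intro k
    rw [setIntegral_congr_fun measurableSet_Ioo (hterm k), integral_const_mul,
      real_beta_integral (by positivity) hb]
    have := gamma_dup k
    have e : (k : ℝ) + 1 / 2 + b = (k : ℝ) + (b - 1 / 2) + 1 := by ring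
    rw [e]
    calc _ = x ^ (2 * k) * (Real.Gamma ((k : ℝ) + 1 / 2) / ((2 * k).factorial : ℝ)) * Real.Gamma b /
          Real.Gamma ((k : ℝ) + (b - 1 / 2) + 1) := by ring
      _ = _ := by
        rw [this]
        rw [div_eq_mul_inv x 2, mul_pow, one_div]
        field_simp
  have hInt : ∀ k : ℕ, IntegrableOn (fun w : ℝ =>
      w ^ (-(1 / 2) : ℝ) * (1 - w) ^ (b - 1) * ((x * Real.sqrt w) ^ (2 * k) / ((2 * k).factorial : ℝ)))
      (Ioo 0 1) := by
    intro k
    exact IntegrableOn.congr_fun ((real_beta_integrable (α := (k : ℝ) + 1 / 2) (by positivity) hb).const_mul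
      (x ^ (2 * k) / ((2 * k).factorial : ℝ))) (fun w hw => (hterm k w hw).symm) measurableSet_Ioo
  have hInt0 : IntegrableOn (fun w : ℝ => w ^ (-(1 / 2) : ℝ) * (1 - w) ^ (b - 1)) (Ioo 0 1) := by
    have := real_beta_integrable (α := 1 / 2) (by norm_num) hb
    norm_num at this
    norm_num
    exact this
  have hnn : ∀ w ∈ Ioo (0 : ℝ) 1, 0 ≤ w ^ (-(1 / 2) : ℝ) * (1 - w) ^ (b - 1) := fun w hw =>
    mul_nonneg (Real.rpow_nonneg hw.1.le _) (Real.rpow_nonneg (by linarith [hw.2]) _)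
  have hs : Summable fun k : ℕ => ∫ w in Ioo (0 : ℝ) 1,
      ‖w ^ (-(1 / 2) : ℝ) * (1 - w) ^ (b - 1) * ((x * Real.sqrt w) ^ (2 * k) / ((2 * k).factorial : ℝ))‖ := by
    refine Summable.of_nonneg_of_le (fun k => integral_nonneg fun w => norm_nonneg _) ?_
      ((Real.hasSum_cosh x).summable.mul_right
        (∫ w in Ioo (0 : ℝ) 1, w ^ (-(1 / 2) : ℝ) * (1 - w) ^ (b - 1)))
    intro k
    rw [← integral_const_mul]
    apply setIntegral_mono_on (hInt k).norm (hInt0.const_mul _) measurableSet_Ioo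
    intro w hw
    have hw0 := hnn w hw
    have h1 : 0 ≤ (x * Real.sqrt w) ^ (2 * k) / ((2 * k).factorial : ℝ) := by
      rw [pow_mul]; positivity
    rw [Real.norm_of_nonneg (mul_nonneg hw0 h1), mul_comm]
    refine mul_le_mul_of_nonneg_right ?_ hw0
    refine div_le_div_of_nonneg_right ?_ (by positivity)
    rw [pow_mul, pow_mul, mul_pow, Real.sq_sqrt hw.1.le]
    apply pow_le_pow_left₀ (by have := hw.1; positivity)
    nlinarith [hw.2, sq_nonneg x]
  have := hasSum_integral_of_summable_integral_norm hInt hs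
  simp_rw [hval] at this
  have e : (∫ w in Ioo (0 : ℝ) 1,
      w ^ (-(1 / 2) : ℝ) * (1 - w) ^ (b - 1) * Real.cosh (x * Real.sqrt w)) =
      ∫ w in Ioo (0 : ℝ) 1, ∑' k : ℕ, w ^ (-(1 / 2) : ℝ) * (1 - w) ^ (b - 1) *
        ((x * Real.sqrt w) ^ (2 * k) / ((2 * k).factorial : ℝ)) := by
    apply setIntegral_congr_fun measurableSet_Ioo
    intro w hw
    simp only
    rw [tsum_mul_left, (Real.hasSum_cosh _).tsum_eq]
  rw [e]
  exact this

lemma watsonF_cosh {b x : ℝ} (hb : 0 < b) :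
    Real.exp x * watsonF b b x =
      ∫ w in Ioo (0 : ℝ) 1, w ^ (-(1 / 2) : ℝ) * (1 - w) ^ (b - 1) * Real.cosh (x * Real.sqrt w) := by
  have hsub := integral_comp_rpow_Ioi_of_pos (p := 2) (by norm_num)
    (g := (Iio (1 : ℝ)).indicator fun w : ℝ =>
      w ^ (-(1 / 2) : ℝ) * (1 - w) ^ (b - 1) * Real.cosh (x * Real.sqrt w))
  have hR : ∫ y in Ioi (0 : ℝ), ((Iio (1 : ℝ)).indicator fun w : ℝ =>
      w ^ (-(1 / 2) : ℝ) * (1 - w) ^ (b - 1) * Real.cosh (x * Real.sqrt w)) y =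
      ∫ w in Ioo (0 : ℝ) 1, w ^ (-(1 / 2) : ℝ) * (1 - w) ^ (b - 1) * Real.cosh (x * Real.sqrt w) := by
    rw [setIntegral_indicator measurableSet_Iio, Ioi_inter_Iio]
  have hL : ∫ t in Ioi (0 : ℝ), ((2 : ℝ) * t ^ ((2 : ℝ) - 1)) • ((Iio (1 : ℝ)).indicator fun w : ℝ =>
      w ^ (-(1 / 2) : ℝ) * (1 - w) ^ (b - 1) * Real.cosh (x * Real.sqrt w)) (t ^ (2 : ℝ)) =
      ∫ t in Ioo (0 : ℝ) 1, (1 - t ^ 2) ^ (b - 1) * (Real.exp (x * t) + Real.exp (-(x * t))) := by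
    rw [← Ioi_inter_Iio, ← setIntegral_indicator measurableSet_Iio]
    apply setIntegral_congr_fun measurableSet_Ioi
    intro t ht
    have ht' : 0 < t := ht
    by_cases h : t < 1
    · have h2 : t ^ (2 : ℝ) < 1 := by
        rw [Real.rpow_two]; nlinarith
      simp only
      rw [indicator_of_mem (show t ^ (2 : ℝ) ∈ Iio 1 from h2), indicator_of_mem (show t ∈ Iio 1 from h)]
      have e1 : (t ^ (2 : ℝ)) ^ (-(1 / 2) : ℝ) = t⁻¹ := by
        rw [← Real.rpow_mul ht'.le, ← Real.rpow_neg_one]; norm_num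
      rw [e1, Real.rpow_two, Real.sqrt_sq ht'.le, Real.cosh_eq]
      have e2 : (2 : ℝ) - 1 = 1 := by norm_num
      rw [e2, Real.rpow_one, smul_eq_mul]
      field_simp
    · have h2 : ¬ t ^ (2 : ℝ) < 1 := by
        rw [Real.rpow_two]; push Not at h ⊢; nlinarith
      simp only
      rw [indicator_of_notMem (show t ^ (2 : ℝ) ∉ Iio 1 from h2), indicator_of_notMem (show t ∉ Iio 1 from h),
        smul_zero]
  rw [← hR, ← hsub, hL]
  -- now the left-hand side
  have hF : IntervalIntegrable (fun u : ℝ => u ^ (b - 1) * (2 - u) ^ (b - 1) * Real.exp (-x * u))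
      volume 0 2 := by
    rw [intervalIntegrable_iff_integrableOn_Ioo_of_le (by norm_num)]
    exact watson_integrable hb hb x
  have h1 := hF.mono_set (c := 0) (d := 1) (by
    rw [uIcc_of_le (by norm_num), uIcc_of_le (by norm_num)]; exact Icc_subset_Icc_right (by norm_num))
  have h2 := hF.mono_set (c := 1) (d := 2) (by
    rw [uIcc_of_le (by norm_num), uIcc_of_le (by norm_num)]; exact Icc_subset_Icc_left (by norm_num))
  unfold watsonF
  rw [← integral_Ioc_eq_integral_Ioo, ← intervalIntegral.integral_of_le (by norm_num),
    ← integral_Ioc_eq_integral_Ioo, ← intervalIntegral.integral_of_le (by norm_num),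
    ← intervalIntegral.integral_add_adjacent_intervals h1 h2]
  have s1 := intervalIntegral.integral_comp_sub_left (a := 0) (b := 1)
    (fun u : ℝ => u ^ (b - 1) * (2 - u) ^ (b - 1) * Real.exp (-x * u)) 1
  have s2 := intervalIntegral.integral_comp_add_left (a := 0) (b := 1)
    (fun u : ℝ => u ^ (b - 1) * (2 - u) ^ (b - 1) * Real.exp (-x * u)) 1
  have i1 := h1.comp_sub_left 1
  have i2 := h2.comp_add_left 1
  norm_num at s1 s2 i1 i2
  simp only [neg_mul]
  rw [← s1, ← s2, ← intervalIntegral.integral_add i1.symm i2, ← intervalIntegral.integral_const_mul]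
  apply intervalIntegral.integral_congr
  intro t ht
  rw [uIcc_of_le zero_le_one] at ht
  simp only
  have p1 : 0 ≤ 1 - t := by linarith [ht.2]
  have p2 : 0 ≤ 1 + t := by linarith [ht.1]
  have e1 : (2 : ℝ) - (1 - t) = 1 + t := by ring
  have e2 : (2 : ℝ) - (1 + t) = 1 - t := by ring
  have e3 : (1 - t ^ 2) ^ (b - 1) = (1 - t) ^ (b - 1) * (1 + t) ^ (b - 1) := by
    rw [← Real.mul_rpow p1 p2]; ring_nf
  have e4 : Real.exp (x * t) = Real.exp x * Real.exp (-(x * (1 - t))) := by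
    rw [← Real.exp_add]; ring_nf
  have e5 : Real.exp (-(x * t)) = Real.exp x * Real.exp (-(x * (1 + t))) := by
    rw [← Real.exp_add]; ring_nf
  rw [e1, e2, e3, e4, e5]
  ring

lemma besselI_eq {b x : ℝ} (hb : 0 < b) (hx : 0 < x) :
    besselI (b - 1 / 2) x =
      (x / 2) ^ (b - 1 / 2) / (Real.sqrt Real.pi * Real.Gamma b) * (Real.exp x * watsonF b b x) := by
  have hG := Real.Gamma_pos_of_pos hb
  have hpi : 0 < Real.sqrt Real.pi := Real.sqrt_pos.mpr Real.pi_pos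
  have h := (cosh_integral (x := x) hb).mul_left
    ((x / 2) ^ (b - 1 / 2) / (Real.sqrt Real.pi * Real.Gamma b))
  rw [← watsonF_cosh hb] at h
  rw [← h.tsum_eq]
  unfold besselI
  congr 1
  ext k
  have e : (x / 2) ^ (2 * (k : ℝ) + (b - 1 / 2)) = (x / 2) ^ (2 * k) * (x / 2) ^ (b - 1 / 2) := by
    rw [Real.rpow_add (by positivity)]
    congr 1
    rw [← Real.rpow_natCast]; push_cast; rfl
  rw [e]
  field_simp
/-- normalised Bessel function `√x e^{-x} I_{b-1/2}(x)` -/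
noncomputable def bh (b x : ℝ) : ℝ :=
  (2 : ℝ) ^ (1 / 2 - b) / (Real.sqrt Real.pi * Real.Gamma b) * (x ^ b * watsonF b b x)

/-- derivative of `bh` -/
noncomputable def bh' (b x : ℝ) : ℝ :=
  (2 : ℝ) ^ (1 / 2 - b) / (Real.sqrt Real.pi * Real.Gamma b) *
    (b * x ^ (b - 1) * watsonF b b x + x ^ b * (-watsonF (b + 1) b x))

lemma bh_hasDerivAt {b x : ℝ} (hb : 0 < b) (hx : 0 < x) : HasDerivAt (bh b) (bh' b x) x := by
  unfold bh bh'
  exact ((Real.hasDerivAt_rpow_const (Or.inl hx.ne')).mul (watsonF_hasDerivAt hb hb x)).const_mul _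

lemma bh'_continuousAt {b x : ℝ} (hb : 0 < b) (hx : 0 < x) : ContinuousAt (bh' b) x := by
  unfold bh'
  have h1 := (watsonF_hasDerivAt hb hb x).continuousAt
  have h2 := (watsonF_hasDerivAt (show 0 < b + 1 by linarith) hb x).continuousAt
  have h3 := (Real.hasDerivAt_rpow_const (p := b) (Or.inl hx.ne')).continuousAt
  have h4 := (Real.hasDerivAt_rpow_const (p := b - 1) (Or.inl hx.ne')).continuousAt
  exact continuousAt_const.mul (((continuousAt_const.mul h4).mul h1).add (h3.mul h2.neg))

lemma bh_bound {b : ℝ} (hb : 0 < b) : ∃ C, 0 < C ∧ ∀ x, 0 < x → |bh b x| ≤ C := by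
  obtain ⟨C, hC, h⟩ := watsonF_bound hb hb
  have hG := Real.Gamma_pos_of_pos hb
  have hpi : 0 < Real.sqrt Real.pi := Real.sqrt_pos.mpr Real.pi_pos
  refine ⟨(2 : ℝ) ^ (1 / 2 - b) / (Real.sqrt Real.pi * Real.Gamma b) * C, by positivity, fun x hx => ?_⟩
  have hF := watsonF_nonneg b b x
  have hxb := Real.rpow_pos_of_pos hx b
  unfold bh
  rw [abs_of_nonneg (by positivity)]
  refine mul_le_mul_of_nonneg_left ?_ (by positivity)
  calc _ ≤ x ^ b * (C * x ^ (-b)) := by gcongr; exact h x hx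
    _ = C := by rw [Real.rpow_neg hx.le]; field_simp

lemma bh'_bound {b : ℝ} (hb : 0 < b) : ∃ C, 0 < C ∧ ∀ x, 0 < x → |bh' b x| ≤ C / x := by
  obtain ⟨C, hC, h⟩ := watsonF_bound hb hb
  obtain ⟨C1, hC1, h1⟩ := watsonF_bound (show 0 < b + 1 by linarith) hb
  have hG := Real.Gamma_pos_of_pos hb
  have hpi : 0 < Real.sqrt Real.pi := Real.sqrt_pos.mpr Real.pi_pos
  refine ⟨(2 : ℝ) ^ (1 / 2 - b) / (Real.sqrt Real.pi * Real.Gamma b) * (b * C + C1),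
    by positivity, fun x hx => ?_⟩
  have hF := watsonF_nonneg b b x
  have hF1 := watsonF_nonneg (b + 1) b x
  have hxb := Real.rpow_pos_of_pos hx b
  have hxb1 := Real.rpow_pos_of_pos hx (b - 1)
  unfold bh'
  rw [abs_mul, abs_of_nonneg (show 0 ≤ (2 : ℝ) ^ (1 / 2 - b) / (Real.sqrt Real.pi * Real.Gamma b) by
    positivity), mul_div_assoc]
  refine mul_le_mul_of_nonneg_left ?_ (by positivity)
  refine (abs_add_le _ _).trans ?_
  rw [mul_neg, abs_neg, abs_of_nonneg (by positivity), abs_of_nonneg (by positivity)]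
  calc _ ≤ b * x ^ (b - 1) * (C * x ^ (-b)) + x ^ b * (C1 * x ^ (-(b + 1))) := by
        gcongr
        · exact h x hx
        · exact h1 x hx
    _ = _ := by
      rw [Real.rpow_neg hx.le, Real.rpow_neg hx.le, Real.rpow_add_one hx.ne', Real.rpow_sub_one hx.ne']
      field_simp

lemma bh_asymp {b : ℝ} (hb : 0 < b) : ∃ C, 0 < C ∧ ∀ x, 0 < x →
    |bh b x - 1 / Real.sqrt (2 * Real.pi)| ≤ C / x := by
  obtain ⟨C, hC, h⟩ := watsonF_asymp hb hb
  have hG := Real.Gamma_pos_of_pos hb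
  have hpi : 0 < Real.sqrt Real.pi := Real.sqrt_pos.mpr Real.pi_pos
  refine ⟨(2 : ℝ) ^ (1 / 2 - b) / (Real.sqrt Real.pi * Real.Gamma b) * C, by positivity, fun x hx => ?_⟩
  have hxb := Real.rpow_pos_of_pos hx b
  have e : bh b x - 1 / Real.sqrt (2 * Real.pi) =
      (2 : ℝ) ^ (1 / 2 - b) / (Real.sqrt Real.pi * Real.Gamma b) *
      (x ^ b * (watsonF b b x - 2 ^ (b - 1) * Real.Gamma b * x ^ (-b))) := by
    have e2 : (1 : ℝ) / Real.sqrt (2 * Real.pi) = (2 : ℝ) ^ (1 / 2 - b) * 2 ^ (b - 1) / Real.sqrt Real.pi := by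
      rw [← Real.rpow_add (by norm_num), Real.sqrt_mul (by norm_num), Real.sqrt_eq_rpow 2]
      rw [show (1 / 2 - b + (b - 1) : ℝ) = -(1 / 2) by ring, Real.rpow_neg (by norm_num)]
      field_simp
    rw [e2]
    unfold bh
    rw [Real.rpow_neg hx.le]
    field_simp
  rw [e, abs_mul, abs_mul, abs_of_nonneg (show 0 ≤ (2 : ℝ) ^ (1 / 2 - b) / (Real.sqrt Real.pi * Real.Gamma b) by
    positivity), mul_div_assoc, abs_of_pos hxb]
  refine mul_le_mul_of_nonneg_left ?_ (by positivity)
  calc _ ≤ x ^ b * (C * x ^ (-(b + 1))) := by gcongr; exact h x hx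
    _ = _ := by
      rw [Real.rpow_neg hx.le, Real.rpow_add_one hx.ne']
      field_simp

/-- Gaussian factor -/
noncomputable def gk (b s z ζ : ℝ) : ℝ :=
  1 / Real.sqrt s * (ζ / z) ^ b * Real.exp (-(z - ζ) ^ 2 / (2 * s))

lemma besselKernel_eq {b s z ζ : ℝ} (hb : 0 < b) (hs : 0 < s) (hz : 0 < z) (hζ : 0 < ζ) :
    besselKernel b s z ζ = gk b s z ζ * bh b (z * ζ / s) := by
  have hx : 0 < z * ζ / s := by positivity
  unfold besselKernel gk bh
  rw [besselI_eq hb hx]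
  have e1 : Real.exp (-(z - ζ) ^ 2 / (2 * s)) =
      Real.exp (-(z ^ 2 + ζ ^ 2) / (2 * s)) * Real.exp (z * ζ / s) := by
    rw [← Real.exp_add]; congr 1; field_simp; ring
  have e2 : (z * ζ / s / 2) ^ (b - 1 / 2) =
      (z * ζ / s) ^ b * (Real.sqrt s / Real.sqrt (z * ζ)) * 2 ^ (1 / 2 - b) := by
    rw [Real.div_rpow hx.le (by norm_num), Real.rpow_sub hx,
      show (1 / 2 - b : ℝ) = -(b - 1 / 2) by ring, Real.rpow_neg (by norm_num),
      ← Real.sqrt_eq_rpow (z * ζ / s), Real.sqrt_div (by positivity)]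
    field_simp
  rw [e1, e2]
  have h1 : 0 < Real.sqrt s := Real.sqrt_pos.mpr hs
  have h2 : 0 < Real.sqrt (z * ζ) := Real.sqrt_pos.mpr (by positivity)
  have h3 : s = Real.sqrt s * Real.sqrt s := (Real.mul_self_sqrt hs.le).symm
  have h4 : Real.sqrt (z * ζ) / s * (Real.sqrt s / Real.sqrt (z * ζ)) = 1 / Real.sqrt s := by
    nth_rewrite 1 [h3]; field_simp
  rw [← h4]
  ring

/-- regular part of the derivative of the kernel -/
noncomputable def regk (b s z ζ : ℝ) : ℝ :=
  gk b s z ζ * (b / ζ * bh b (z * ζ / s) +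
    (z - ζ) / s * (bh b (z * ζ / s) - 1 / Real.sqrt (2 * Real.pi)) + bh' b (z * ζ / s) * (z / s))

lemma deriv_besselKernel {b s z ζ : ℝ} (hb : 0 < b) (hs : 0 < s) (hz : 0 < z) (hζ : 0 < ζ) :
    deriv (fun ζ => besselKernel b s z ζ) ζ =
      regk b s z ζ + gk b s z ζ * ((z - ζ) / s * (1 / Real.sqrt (2 * Real.pi))) := by
  have hev : (fun ζ => besselKernel b s z ζ) =ᶠ[𝓝 ζ] fun ζ => gk b s z ζ * bh b (z * ζ / s) := by
    filter_upwards [lt_mem_nhds hζ] with ζ' h'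
    exact besselKernel_eq hb hs hz h'
  rw [hev.deriv_eq]
  have hx : 0 < z * ζ / s := by positivity
  have d1 : HasDerivAt (fun ζ : ℝ => (ζ / z) ^ b) (1 / z * b * (ζ / z) ^ (b - 1)) ζ :=
    ((hasDerivAt_id ζ).div_const z).rpow_const (Or.inl (div_pos hζ hz).ne')
  have d2 : HasDerivAt (fun ζ : ℝ => -(z - ζ) ^ 2 / (2 * s)) ((z - ζ) / s) ζ := by
    have := ((((hasDerivAt_id ζ).const_sub z).pow 2).neg).div_const (2 * s)
    refine this.congr_deriv ?_
    simp only [id]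
    field_simp
    ring
  have d3 : HasDerivAt (fun ζ : ℝ => z * ζ / s) (z / s) ζ := by
    have := ((hasDerivAt_id ζ).const_mul z).div_const s
    simpa using this
  have d4 : HasDerivAt (fun ζ : ℝ => bh b (z * ζ / s)) (bh' b (z * ζ / s) * (z / s)) ζ :=
    HasDerivAt.comp (h₂ := bh b) (h := fun ζ : ℝ => z * ζ / s) ζ (bh_hasDerivAt hb hx) d3
  have d5 : HasDerivAt (fun ζ : ℝ => gk b s z ζ) (gk b s z ζ * (b / ζ + (z - ζ) / s)) ζ := by
    have := (d1.const_mul (1 / Real.sqrt s)).mul d2.exp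
    refine this.congr_deriv ?_
    unfold gk
    rw [Real.rpow_sub_one (div_pos hζ hz).ne']
    field_simp
  have d6 : HasDerivAt (fun ζ : ℝ => gk b s z ζ * bh b (z * ζ / s)) _ ζ := d5.mul d4
  rw [d6.deriv]
  unfold regk
  ring

lemma gk_nonneg {b s z ζ : ℝ} (hz : 0 < z) (hζ : 0 < ζ) : 0 ≤ gk b s z ζ := by
  unfold gk
  have := Real.rpow_pos_of_pos (div_pos hζ hz) b
  positivity

lemma gk_bound {b s z ζ m M : ℝ} (hb : 0 < b) (hs : 0 < s) (hm : 0 < m) (hz : m ≤ z)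
    (hζ : m ≤ ζ) (hζM : ζ ≤ M) : gk b s z ζ ≤ (M / m) ^ b * (1 / Real.sqrt s) := by
  unfold gk
  have h1 : (ζ / z) ^ b ≤ (M / m) ^ b := by
    apply Real.rpow_le_rpow (div_nonneg (by linarith) (by linarith)) _ hb.le
    apply div_le_div₀ <;> linarith
  have h2 : Real.exp (-(z - ζ) ^ 2 / (2 * s)) ≤ 1 := by
    apply Real.exp_le_one_iff.mpr
    apply div_nonpos_of_nonpos_of_nonneg
    · nlinarith [sq_nonneg (z - ζ)]
    · positivity
  have h0 : 0 ≤ (ζ / z) ^ b := Real.rpow_nonneg (div_nonneg (by linarith) (by linarith)) _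
  have h3 : 0 ≤ 1 / Real.sqrt s := by positivity
  calc _ ≤ 1 / Real.sqrt s * (M / m) ^ b * 1 := by
        apply mul_le_mul _ h2 (Real.exp_pos _).le
        · exact mul_nonneg h3 (h0.trans h1)
        · exact mul_le_mul_of_nonneg_left h1 h3
    _ = _ := by ring

lemma regk_bound {b m M : ℝ} (hb : 0 < b) (hm : 0 < m) (hmM : m ≤ M) :
    ∃ C, 0 < C ∧ ∀ s z ζ, 0 < s → m ≤ z → z ≤ M → m ≤ ζ → ζ ≤ M →
      |regk b s z ζ| ≤ C * (1 / Real.sqrt s) := by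
  obtain ⟨C1, hC1, h1⟩ := bh_bound hb
  obtain ⟨C2, hC2, h2⟩ := bh'_bound hb
  obtain ⟨C3, hC3, h3⟩ := bh_asymp hb
  have hM : 0 < M := by linarith
  have hMm : 0 < (M / m) ^ b := Real.rpow_pos_of_pos (by positivity) _
  refine ⟨(M / m) ^ b * (b / m * C1 + M * C3 / (m * m) + C2 / m), by positivity, ?_⟩
  intro s z ζ hs hz hzM hζ hζM
  have hz0 : 0 < z := by linarith
  have hζ0 : 0 < ζ := by linarith
  have hx : 0 < z * ζ / s := by positivity
  unfold regk
  rw [abs_mul, abs_of_nonneg (gk_nonneg hz0 hζ0)]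
  have g := gk_bound hb hs hm hz hζ hζM
  have t1 : |b / ζ * bh b (z * ζ / s)| ≤ b / m * C1 := by
    rw [abs_mul, abs_of_pos (by positivity)]
    gcongr
    exact h1 _ hx
  have t2 : |(z - ζ) / s * (bh b (z * ζ / s) - 1 / Real.sqrt (2 * Real.pi))| ≤ M * C3 / (m * m) := by
    rw [abs_mul, abs_div, abs_of_pos hs]
    calc _ ≤ M / s * (C3 / (z * ζ / s)) := by
          gcongr
          · rw [abs_le]; constructor <;> linarith
          · exact h3 _ hx
      _ = M * C3 / (z * ζ) := by field_simp
      _ ≤ _ := by gcongr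
  have t3 : |bh' b (z * ζ / s) * (z / s)| ≤ C2 / m := by
    rw [abs_mul, abs_of_pos (show 0 < z / s by positivity)]
    calc _ ≤ C2 / (z * ζ / s) * (z / s) := by
          gcongr
          exact h2 _ hx
      _ = C2 / ζ := by field_simp
      _ ≤ _ := by gcongr
  calc _ ≤ ((M / m) ^ b * (1 / Real.sqrt s)) * (b / m * C1 + M * C3 / (m * m) + C2 / m) := by
        apply mul_le_mul g _ (abs_nonneg _) (by positivity)
        exact (abs_add_three _ _ _).trans (by linarith)
    _ = _ := by ring

lemma gk_tendsto {X : Type*} {l : Filter X} {s z ζ : X → ℝ} {b s0 z0 ζ0 : ℝ}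
    (hs0 : 0 < s0) (hz0 : 0 < z0) (hζ0 : 0 < ζ0) (hs : Tendsto s l (𝓝 s0))
    (hz : Tendsto z l (𝓝 z0)) (hζ : Tendsto ζ l (𝓝 ζ0)) :
    Tendsto (fun x => gk b (s x) (z x) (ζ x)) l (𝓝 (gk b s0 z0 ζ0)) := by
  unfold gk
  have h1 : Tendsto (fun x => 1 / Real.sqrt (s x)) l (𝓝 (1 / Real.sqrt s0)) :=
    tendsto_const_nhds.div hs.sqrt (Real.sqrt_pos.mpr hs0).ne'
  have h2 : Tendsto (fun x => (ζ x / z x) ^ b) l (𝓝 ((ζ0 / z0) ^ b)) :=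
    (hζ.div hz hz0.ne').rpow_const (Or.inl (div_pos hζ0 hz0).ne')
  have h3 : Tendsto (fun x => -(z x - ζ x) ^ 2 / (2 * s x)) l (𝓝 (-(z0 - ζ0) ^ 2 / (2 * s0))) :=
    (((hz.sub hζ).pow 2).neg).div (hs.const_mul 2) (by positivity)
  exact (h1.mul h2).mul ((Real.continuous_exp.tendsto _).comp h3)

lemma regk_tendsto {X : Type*} {l : Filter X} {s z ζ : X → ℝ} {b s0 z0 ζ0 : ℝ} (hb : 0 < b)
    (hs0 : 0 < s0) (hz0 : 0 < z0) (hζ0 : 0 < ζ0) (hs : Tendsto s l (𝓝 s0))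
    (hz : Tendsto z l (𝓝 z0)) (hζ : Tendsto ζ l (𝓝 ζ0)) :
    Tendsto (fun x => regk b (s x) (z x) (ζ x)) l (𝓝 (regk b s0 z0 ζ0)) := by
  unfold regk
  have hx : 0 < z0 * ζ0 / s0 := by positivity
  have h0 : Tendsto (fun x => z x * ζ x / s x) l (𝓝 (z0 * ζ0 / s0)) := (hz.mul hζ).div hs hs0.ne'
  have h1 : Tendsto (fun x => bh b (z x * ζ x / s x)) l (𝓝 (bh b (z0 * ζ0 / s0))) :=
    ((bh_hasDerivAt hb hx).continuousAt.tendsto).comp h0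
  have h2 : Tendsto (fun x => bh' b (z x * ζ x / s x)) l (𝓝 (bh' b (z0 * ζ0 / s0))) :=
    ((bh'_continuousAt hb hx).tendsto).comp h0
  exact (gk_tendsto hs0 hz0 hζ0 hs hz hζ).mul
    ((((tendsto_const_nhds.div hζ hζ0.ne').mul h1).add
      (((hz.sub hζ).div hs hs0.ne').mul (h1.sub tendsto_const_nhds))).add
      (h2.mul (hz.div hs hs0.ne')))
lemma rho_aux {a v : ℝ} (hv : 0 < v) :
    (|(-1 : ℝ)| * v ^ ((-1 : ℝ) - 1)) • ((v ^ (-1 : ℝ)) ^ ((1 / 2 : ℝ) - 1) * Real.exp (-a * v ^ (-1 : ℝ)))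
      = v⁻¹ * (1 / Real.sqrt v) * Real.exp (-a / v) := by
  rw [abs_neg, abs_one, one_mul, smul_eq_mul, ← mul_assoc, ← Real.rpow_mul hv.le,
    ← Real.rpow_add hv, Real.rpow_neg_one, ← div_eq_mul_inv]
  congr 1
  rw [Real.sqrt_eq_rpow, one_div (v ^ (1 / 2 : ℝ)), ← Real.rpow_neg hv.le, ← Real.rpow_neg_one, ← Real.rpow_add hv]
  norm_num

lemma rho_integrable {a : ℝ} (ha : 0 < a) :
    IntegrableOn (fun v : ℝ => v⁻¹ * (1 / Real.sqrt v) * Real.exp (-a / v)) (Ioi 0) := by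
  have := (integrableOn_Ioi_comp_rpow_iff
    (fun w : ℝ => w ^ ((1 / 2 : ℝ) - 1) * Real.exp (-a * w)) (p := -1) (by norm_num)).mpr
    (gamma_integrable (by norm_num) ha)
  exact this.congr_fun (fun v hv => rho_aux hv) measurableSet_Ioi

lemma rho_integral :
    ∫ v in Ioi (0 : ℝ), v⁻¹ * (1 / Real.sqrt v) * Real.exp (-(1 / 2) / v) = Real.sqrt (2 * Real.pi) := by
  have h := integral_comp_rpow_Ioi
    (fun w : ℝ => w ^ ((1 / 2 : ℝ) - 1) * Real.exp (-(1 / 2) * w)) (p := -1) (by norm_num)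
  rw [setIntegral_congr_fun measurableSet_Ioi (fun v hv => rho_aux hv)] at h
  rw [h, gamma_integral (by norm_num) (by norm_num), Real.Gamma_one_half_eq, Real.sqrt_mul (by norm_num),
    Real.sqrt_eq_rpow 2, Real.rpow_neg (by norm_num), one_div 2, Real.inv_rpow (by norm_num), inv_inv]
  ring

lemma jump_exp_bound {s d w Y L : ℝ} (hs : 0 < s) (hd : 0 ≤ d) (hw : |w - Y| ≤ L * s) :
    Real.exp (-((Y + d) - w) ^ 2 / (2 * s)) ≤ Real.exp (L * d) * Real.exp (-(d ^ 2 / 2) / s) := by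
  rw [← Real.exp_add]
  apply Real.exp_le_exp.mpr
  have h := (abs_le.mp hw).2
  have e : L * d + -(d ^ 2 / 2) / s = (2 * s * L * d - d ^ 2) / (2 * s) := by field_simp; ring
  rw [e]
  apply div_le_div_of_nonneg_right _ (by positivity)
  nlinarith [sq_nonneg (Y - w)]

lemma jump_integrable {τ Y L K z : ℝ} {w g : ℝ → ℝ} (hz : Y < z)
    (hwc : ContinuousOn w (Ioo 0 τ)) (hw : ∀ s ∈ Ioo 0 τ, |w s - Y| ≤ L * s)
    (hgc : ContinuousOn g (Ioo 0 τ)) (hgb : ∀ s ∈ Ioo 0 τ, |g s| ≤ K) :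
    IntegrableOn (fun s => (z - Y) * s⁻¹ * (1 / Real.sqrt s) *
      Real.exp (-(z - w s) ^ 2 / (2 * s)) * g s) (Ioo 0 τ) := by
  have hd : 0 < z - Y := by linarith
  have hi : IntegrableOn (fun s => ((z - Y) * Real.exp (L * (z - Y)) * K) *
      (s⁻¹ * (1 / Real.sqrt s) * Real.exp (-((z - Y) ^ 2 / 2) / s))) (Ioo 0 τ) :=
    ((rho_integrable (a := (z - Y) ^ 2 / 2) (by positivity)).mono_set Ioo_subset_Ioi_self).const_mul _
  refine Integrable.mono' hi ?_ ?_
  · refine ContinuousOn.aestronglyMeasurable ?_ measurableSet_Ioo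
    intro s hs
    have hs0 : s ≠ 0 := hs.1.ne'
    have hq : Real.sqrt s ≠ 0 := (Real.sqrt_pos.mpr hs.1).ne'
    have c1 := hwc s hs
    have c2 := hgc s hs
    have c3 : ContinuousWithinAt (fun s : ℝ => s) (Ioo 0 τ) s := continuousWithinAt_id
    have c4 : ContinuousWithinAt (fun s : ℝ => -(z - w s) ^ 2 / (2 * s)) (Ioo 0 τ) s :=
      (((continuousWithinAt_const.sub c1).pow 2).neg).div (continuousWithinAt_const.mul c3) (by simpa using hs0)
    exact (((continuousWithinAt_const.mul (c3.inv₀ hs0)).mul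
      (continuousWithinAt_const.div c3.sqrt hq)).mul c4.rexp).mul c2
  · filter_upwards [ae_restrict_mem measurableSet_Ioo] with s hs
    have hs0 : 0 < s := hs.1
    have h1 := jump_exp_bound hs0 hd.le (hw s hs)
    rw [show Y + (z - Y) = z by ring] at h1
    rw [norm_mul, Real.norm_of_nonneg (by positivity), Real.norm_eq_abs]
    calc _ ≤ (z - Y) * s⁻¹ * (1 / Real.sqrt s) *
          (Real.exp (L * (z - Y)) * Real.exp (-((z - Y) ^ 2 / 2) / s)) * K := by
          gcongr
          exact hgb s hs
      _ = _ := by ring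

lemma jump_scale {d v Y : ℝ} {w g : ℝ → ℝ} (hd : 0 < d) (hv : 0 < v) :
    d ^ 2 * (d * (d ^ 2 * v)⁻¹ * (1 / Real.sqrt (d ^ 2 * v)) *
      Real.exp (-((Y + d) - w (d ^ 2 * v)) ^ 2 / (2 * (d ^ 2 * v))) * g (d ^ 2 * v)) =
    v⁻¹ * (1 / Real.sqrt v) *
      Real.exp (-((Y + d) - w (d ^ 2 * v)) ^ 2 / (2 * (d ^ 2 * v))) * g (d ^ 2 * v) := by
  rw [Real.sqrt_mul (by positivity), Real.sqrt_sq hd.le]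
  field_simp

lemma jump_lemma {τ Y L K G0 : ℝ} (hτ : 0 < τ) (hL : 0 ≤ L) {w : ℝ → ℝ} {G : ℝ → ℝ → ℝ}
    (hwc : ContinuousOn w (Ioo 0 τ)) (hw : ∀ s ∈ Ioo 0 τ, |w s - Y| ≤ L * s)
    (hGc : ∀ z, Y < z → ContinuousOn (G z) (Ioo 0 τ))
    (hGb : ∀ z ∈ Ioc Y (Y + 1), ∀ s ∈ Ioo 0 τ, |G z s| ≤ K)
    (hGl : ∀ v, 0 < v → Tendsto (fun z => G z ((z - Y) ^ 2 * v)) (𝓝[>] Y) (𝓝 G0)) :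
    Tendsto (fun z => ∫ s in Ioo 0 τ, (z - Y) * s⁻¹ * (1 / Real.sqrt s) *
      Real.exp (-(z - w s) ^ 2 / (2 * s)) * G z s) (𝓝[>] Y) (𝓝 (Real.sqrt (2 * Real.pi) * G0)) := by
  set H : ℝ → ℝ → ℝ := fun z => (Ioo 0 τ).indicator fun s => (z - Y) * s⁻¹ * (1 / Real.sqrt s) *
      Real.exp (-(z - w s) ^ 2 / (2 * s)) * G z s with hH
  have hHint : ∀ z ∈ Ioc Y (Y + 1), Integrable (H z) := fun z hz => by
    rw [hH]
    exact (integrable_indicator_iff measurableSet_Ioo).mpr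
      (jump_integrable hz.1 hwc hw (hGc z hz.1) (hGb z hz))
  -- rescaled integral
  have hresc : ∀ z, Y < z → ∫ s in Ioo 0 τ, (z - Y) * s⁻¹ * (1 / Real.sqrt s) *
      Real.exp (-(z - w s) ^ 2 / (2 * s)) * G z s =
      ∫ v in Ioi (0 : ℝ), (z - Y) ^ 2 * H z ((z - Y) ^ 2 * v) := by
    intro z hz
    have hd : 0 < (z - Y) ^ 2 := by have : 0 < z - Y := by linarith
                                    positivity
    have := integral_comp_mul_left_Ioi' (H z) 0 hd
    rw [mul_zero, smul_eq_mul, ← integral_const_mul] at this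
    rw [this, hH, setIntegral_indicator measurableSet_Ioo,
      inter_eq_self_of_subset_right Ioo_subset_Ioi_self]
  have hev : ∀ᶠ z in 𝓝[>] Y, z ∈ Ioc Y (Y + 1) := Ioc_mem_nhdsGT (by linarith)
  have hpt : ∀ z v, Y < z → 0 < v → (z - Y) ^ 2 * v < τ →
      (z - Y) ^ 2 * H z ((z - Y) ^ 2 * v) = v⁻¹ * (1 / Real.sqrt v) *
      Real.exp (-(z - w ((z - Y) ^ 2 * v)) ^ 2 / (2 * ((z - Y) ^ 2 * v))) * G z ((z - Y) ^ 2 * v) := by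
    intro z v hz hv h
    have hd : 0 < z - Y := by linarith
    rw [hH]
    simp only
    rw [indicator_of_mem (show (z - Y) ^ 2 * v ∈ Ioo 0 τ from ⟨by positivity, h⟩)]
    have := jump_scale (d := z - Y) (v := v) (Y := Y) (w := w) (g := G z) hd hv
    rw [show Y + (z - Y) = z by ring] at this
    exact this
  have hlim : Real.sqrt (2 * Real.pi) * G0 =
      ∫ v in Ioi (0 : ℝ), v⁻¹ * (1 / Real.sqrt v) * Real.exp (-(1 / 2) / v) * G0 := by
    rw [integral_mul_const, rho_integral]
  rw [hlim]
  refine Tendsto.congr' (f₁ := fun z => ∫ v in Ioi (0 : ℝ), (z - Y) ^ 2 * H z ((z - Y) ^ 2 * v)) ?_ ?_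
  · filter_upwards [hev] with z hz
    exact (hresc z hz.1).symm
  apply tendsto_integral_filter_of_dominated_convergence
    (fun v => (v⁻¹ * (1 / Real.sqrt v) * Real.exp (-(1 / 2) / v)) * (Real.exp L * K))
  · filter_upwards [hev] with z hz
    have hd : 0 < (z - Y) ^ 2 := by have : 0 < z - Y := by linarith [hz.1]
                                    positivity
    exact (((hHint z hz).comp_mul_left' hd.ne').const_mul _).aestronglyMeasurable.restrict
  · filter_upwards [hev] with z hz
    filter_upwards [ae_restrict_mem measurableSet_Ioi] with v hv
    have hv0 : 0 < v := hv
    have hd : 0 < z - Y := by linarith [hz.1]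
    have hK : 0 ≤ K := (abs_nonneg _).trans (hGb z hz (τ / 2) ⟨by linarith, by linarith⟩)
    by_cases h : (z - Y) ^ 2 * v < τ
    · have hmem : (z - Y) ^ 2 * v ∈ Ioo 0 τ := ⟨by positivity, h⟩
      rw [hpt z v hz.1 hv h, norm_mul, Real.norm_of_nonneg (by positivity), Real.norm_eq_abs]
      have h1 := jump_exp_bound hmem.1 hd.le (hw _ hmem)
      rw [show Y + (z - Y) = z by ring] at h1
      have h2 : -((z - Y) ^ 2 / 2) / ((z - Y) ^ 2 * v) = -(1 / 2) / v := by field_simp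
      rw [h2] at h1
      have h3 : Real.exp (L * (z - Y)) ≤ Real.exp L := by
        apply Real.exp_le_exp.mpr
        nlinarith [hz.2]
      calc _ ≤ v⁻¹ * (1 / Real.sqrt v) * (Real.exp L * Real.exp (-(1 / 2) / v)) * K := by
            gcongr
            · exact h1.trans (by gcongr)
            · exact hGb z hz _ hmem
        _ = _ := by ring
    · rw [hH]
      simp only
      rw [indicator_of_notMem (fun hm => h hm.2), mul_zero, norm_zero]
      positivity
  · exact (rho_integrable (by norm_num)).mul_const _
  · filter_upwards [ae_restrict_mem measurableSet_Ioi] with v hv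
    have hv0 : 0 < v := hv
    have hz0 : Tendsto (fun z => z - Y) (𝓝[>] Y) (𝓝 0) := by
      have : Tendsto (fun z => z - Y) (𝓝 Y) (𝓝 (Y - Y)) := by
        exact tendsto_id.sub tendsto_const_nhds
      rw [sub_self] at this
      exact this.mono_left nhdsWithin_le_nhds
    have hs0 : Tendsto (fun z => (z - Y) ^ 2 * v) (𝓝[>] Y) (𝓝 0) := by
      have := (hz0.pow 2).mul_const v
      simpa using this
    have hev2 : ∀ᶠ z in 𝓝[>] Y, (z - Y) ^ 2 * v < τ := hs0.eventually_lt_const hτ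
    -- the ratio tends to zero
    have hr : Tendsto (fun z => (Y - w ((z - Y) ^ 2 * v)) / (z - Y)) (𝓝[>] Y) (𝓝 0) := by
      have hb : Tendsto (fun z => L * (z - Y) * v) (𝓝[>] Y) (𝓝 0) := by
        have := (hz0.const_mul L).mul_const v
        simpa using this
      refine squeeze_zero_norm' ?_ hb
      filter_upwards [hev, hev2] with z hz h2
      have hd : 0 < z - Y := by linarith [hz.1]
      have := hw _ (⟨by positivity, h2⟩ : (z - Y) ^ 2 * v ∈ Ioo 0 τ)
      rw [Real.norm_eq_abs, abs_div, abs_of_pos hd, div_le_iff₀ hd, abs_sub_comm]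
      calc _ ≤ _ := this
        _ = _ := by ring
    have he : Tendsto (fun z => Real.exp (-(1 + (Y - w ((z - Y) ^ 2 * v)) / (z - Y)) ^ 2 / (2 * v)))
        (𝓝[>] Y) (𝓝 (Real.exp (-(1 / 2) / v))) := by
      have := (((hr.const_add 1).pow 2).neg).div_const (2 * v)
      have e : -(1 + 0) ^ 2 / (2 * v) = -(1 / 2) / v := by field_simp; norm_num
      rw [e] at this
      exact (Real.continuous_exp.tendsto _).comp this
    refine Tendsto.congr' ?_ ((he.const_mul (v⁻¹ * (1 / Real.sqrt v))).mul (hGl v hv0))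
    filter_upwards [hev, hev2] with z hz h2
    have hd : 0 < z - Y := by linarith [hz.1]
    rw [hpt z v hz.1 hv0 h2]
    congr 3
    field_simp
    ring

/-- jump relation of the single-layer Bessel potential at the moving
boundary: the improper integral at `z = y(τ)` converges and
`lim_{z→y(τ)⁺} q(τ,z) = Ψ(τ) + ∫_0^τ Ψ(k)·[∂q_{τ−k}(y(τ),ζ,b)/∂ζ]|_{ζ=y(k)} dk`. -/
theorem bessel_potential_jump_relation
    (b T' : ℝ) (hb : 1 / 2 ≤ b) (hT' : 0 < T')
    (y Ψ : ℝ → ℝ)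
    (hy : ContDiffOn ℝ 1 y (Set.Icc 0 T'))
    (hypos : ∀ k ∈ Set.Icc (0 : ℝ) T', 0 < y k)
    (hΨ : ContinuousOn Ψ (Set.Icc 0 T'))
    (q : ℝ → ℝ → ℝ)
    (hq : ∀ τ z, q τ z =
      ∫ k in (0 : ℝ)..τ, Ψ k * deriv (fun ζ => besselKernel b (τ - k) z ζ) (y k))
    (τ : ℝ) (hτ : τ ∈ Set.Ioc 0 T') :
    IntervalIntegrable
      (fun k => Ψ k * deriv (fun ζ => besselKernel b (τ - k) (y τ) ζ) (y k))
      MeasureTheory.volume 0 τ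
    ∧ Filter.Tendsto (fun z => q τ z) (nhdsWithin (y τ) (Set.Ioi (y τ)))
        (nhds (Ψ τ +
          ∫ k in (0 : ℝ)..τ, Ψ k * deriv (fun ζ => besselKernel b (τ - k) (y τ) ζ) (y k))) := by
  have hb0 : 0 < b := by linarith
  have hτ0 : 0 < τ := hτ.1
  have hIcc : ∀ k ∈ Ioo 0 τ, k ∈ Icc 0 T' := fun k hk => ⟨hk.1.le, hk.2.le.trans hτ.2⟩
  have hτI : τ ∈ Icc 0 T' := ⟨hτ0.le, hτ.2⟩
  have hyc : ContinuousOn y (Icc 0 T') := hy.continuousOn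
  have hne : (Icc (0 : ℝ) T').Nonempty := ⟨τ, hτI⟩
  obtain ⟨km, hkm, hmin⟩ := isCompact_Icc.exists_isMinOn hne hyc
  obtain ⟨kM, hkM, hmax⟩ := isCompact_Icc.exists_isMaxOn hne hyc
  obtain ⟨K, hK⟩ := isCompact_Icc.exists_bound_of_continuousOn hΨ
  obtain ⟨L, hLip⟩ := hy.exists_lipschitzOnWith one_ne_zero (convex_Icc 0 T') isCompact_Icc
  set m := y km with hm
  set M := y kM + 1 with hM
  set Y := y τ with hY
  have hm0 : 0 < m := hypos km hkm
  have hym : ∀ k ∈ Icc 0 T', m ≤ y k := fun k hk => hmin hk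
  have hyM : ∀ k ∈ Icc 0 T', y k + 1 ≤ M := fun k hk => by
    have : y k ≤ y kM := hmax hk
    linarith
  have hY0 : 0 < Y := hypos τ hτI
  have hmY : m ≤ Y := hym τ hτI
  have hYM : Y + 1 ≤ M := hyM τ hτI
  have hK0 : 0 ≤ K := (norm_nonneg _).trans (hK τ hτI)
  have hL0 : (0 : ℝ) ≤ L := L.2
  have hlip : ∀ k ∈ Icc 0 T', k ≤ τ → |y k - Y| ≤ L * (τ - k) := fun k hk hkt => by
    have := hLip.dist_le_mul k hk τ hτI
    rw [Real.dist_eq, Real.dist_eq, abs_sub_comm k τ, abs_of_nonneg (by linarith : 0 ≤ τ - k)] at this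
    exact this
  obtain ⟨C, hC, hreg⟩ := regk_bound (M := M) hb0 hm0 (by linarith)
  set c := 1 / Real.sqrt (2 * Real.pi) with hc
  have hsq : 0 < Real.sqrt (2 * Real.pi) := Real.sqrt_pos.mpr (by positivity)
  have hc0 : 0 < c := by rw [hc]; positivity
  -- regular and singular part
  set A : ℝ → ℝ → ℝ := fun z k => Ψ k * (regk b (τ - k) z (y k) +
    gk b (τ - k) z (y k) * ((Y - y k) / (τ - k) * c)) with hA
  set B : ℝ → ℝ → ℝ := fun z k => Ψ k * (gk b (τ - k) z (y k) * ((z - Y) / (τ - k) * c)) with hB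
  have hdec : ∀ z, 0 < z → ∀ k ∈ Ioo 0 τ,
      Ψ k * deriv (fun ζ => besselKernel b (τ - k) z ζ) (y k) = A z k + B z k := by
    intro z hz k hk
    rw [deriv_besselKernel hb0 (by linarith [hk.2]) hz (hypos k (hIcc k hk)), hA, hB]
    simp only
    ring
  have hycw : ∀ k ∈ Ioo 0 τ, Tendsto y (𝓝[Ioo 0 τ] k) (𝓝 (y k)) := fun k hk =>
    (hyc k (hIcc k hk)).mono hIcc
  have hΨcw : ∀ k ∈ Ioo 0 τ, Tendsto Ψ (𝓝[Ioo 0 τ] k) (𝓝 (Ψ k)) := fun k hk =>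
    (hΨ k (hIcc k hk)).mono hIcc
  have hAmeas : ∀ z, 0 < z → AEStronglyMeasurable (A z) (volume.restrict (Ioo 0 τ)) := by
    intro z hz
    refine ContinuousOn.aestronglyMeasurable ?_ measurableSet_Ioo
    intro k hk
    have hs : 0 < τ - k := by linarith [hk.2]
    have c0 : Tendsto (fun k : ℝ => k) (𝓝[Ioo 0 τ] k) (𝓝 k) := continuousWithinAt_id
    have c1 : Tendsto (fun k : ℝ => τ - k) (𝓝[Ioo 0 τ] k) (𝓝 (τ - k)) := tendsto_const_nhds.sub c0
    have c2 := hycw k hk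
    have hyk := hypos k (hIcc k hk)
    exact (hΨcw k hk).mul ((regk_tendsto hb0 hs hz hyk c1 tendsto_const_nhds c2).add
      ((gk_tendsto hs hz hyk c1 tendsto_const_nhds c2).mul
        (((tendsto_const_nhds.sub c2).div c1 hs.ne').mul tendsto_const_nhds)))
  have hbdint : IntegrableOn (fun k => (K * (C + (M / m) ^ b * (L * c))) * (1 / Real.sqrt (τ - k)))
      (Ioo 0 τ) := by
    have h1 := (intervalIntegral.intervalIntegrable_rpow' (a := 0) (b := τ) (r := -(1 / 2)) (by norm_num))
    have h2 := (h1.comp_sub_left τ).symm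
    rw [sub_self, sub_zero, intervalIntegrable_iff_integrableOn_Ioo_of_le hτ0.le] at h2
    refine Integrable.const_mul ?_ _
    refine IntegrableOn.congr_fun h2 ?_ measurableSet_Ioo
    intro k hk
    simp only
    rw [Real.rpow_neg (by linarith [hk.2]), Real.sqrt_eq_rpow, one_div (_ ^ _)]
  have hAbd : ∀ z, Y ≤ z → z ≤ Y + 1 → ∀ k ∈ Ioo 0 τ,
      ‖A z k‖ ≤ (K * (C + (M / m) ^ b * (L * c))) * (1 / Real.sqrt (τ - k)) := by
    intro z hz hz1 k hk
    have hkI := hIcc k hk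
    have hs : 0 < τ - k := by linarith [hk.2]
    have hyk := hypos k hkI
    have e1 := hreg (τ - k) z (y k) hs (by linarith) (by linarith) (hym k hkI) (by linarith [hyM k hkI])
    have e2 := gk_bound (M := M) hb0 hs hm0 (by linarith : m ≤ z) (hym k hkI) (by linarith [hyM k hkI])
    have e3 : |(Y - y k) / (τ - k) * c| ≤ L * c := by
      rw [abs_mul, abs_of_pos hc0, abs_div, abs_of_pos hs]
      apply mul_le_mul_of_nonneg_right _ hc0.le
      rw [div_le_iff₀ hs, abs_sub_comm]
      exact hlip k hkI hk.2.le
    have e4 : 0 ≤ (M / m) ^ b := Real.rpow_nonneg (div_nonneg (by linarith) hm0.le) _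
    have e5 := gk_nonneg (b := b) (s := τ - k) (show 0 < z by linarith) hyk
    rw [hA]
    simp only
    rw [norm_mul]
    calc _ ≤ K * (C * (1 / Real.sqrt (τ - k)) +
          ((M / m) ^ b * (1 / Real.sqrt (τ - k))) * (L * c)) := by
          apply mul_le_mul (hK k hkI) _ (norm_nonneg _) hK0
          rw [Real.norm_eq_abs]
          refine (abs_add_le _ _).trans ?_
          apply add_le_add e1
          rw [abs_mul, abs_of_nonneg e5]
          apply mul_le_mul e2 e3 (abs_nonneg _)
          positivity
      _ = _ := by ring
  have hAint : ∀ z, Y ≤ z → z ≤ Y + 1 → IntegrableOn (A z) (Ioo 0 τ) := by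
    intro z hz hz1
    refine Integrable.mono' hbdint (hAmeas z (by linarith)) ?_
    filter_upwards [ae_restrict_mem measurableSet_Ioo] with k hk
    exact hAbd z hz hz1 k hk
  have hBY : ∀ k, B Y k = 0 := fun k => by rw [hB]; simp
  have hfull : EqOn (fun k => Ψ k * deriv (fun ζ => besselKernel b (τ - k) Y ζ) (y k)) (A Y)
      (Ioo 0 τ) := by
    intro k hk
    simp only
    rw [hdec Y hY0 k hk, hBY, add_zero]
  refine ⟨?_, ?_⟩
  · rw [intervalIntegrable_iff_integrableOn_Ioo_of_le hτ0.le]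
    exact (hAint Y le_rfl (by linarith)).congr_fun hfull.symm measurableSet_Ioo
  have hval : ∫ k in (0 : ℝ)..τ, Ψ k * deriv (fun ζ => besselKernel b (τ - k) Y ζ) (y k) =
      ∫ k in Ioo 0 τ, A Y k := by
    rw [intervalIntegral.integral_of_le hτ0.le, integral_Ioc_eq_integral_Ioo]
    exact setIntegral_congr_fun measurableSet_Ioo hfull
  rw [hval]
  have hev : ∀ᶠ z in 𝓝[>] Y, z ∈ Ioc Y (Y + 1) := Ioc_mem_nhdsGT (by linarith)
  have hid : Tendsto (fun z : ℝ => z) (𝓝[>] Y) (𝓝 Y) := tendsto_id.mono_left nhdsWithin_le_nhds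
  -- the regular part converges
  have hAlim : Tendsto (fun z => ∫ k in Ioo 0 τ, A z k) (𝓝[>] Y) (𝓝 (∫ k in Ioo 0 τ, A Y k)) := by
    apply tendsto_integral_filter_of_dominated_convergence
      (fun k => (K * (C + (M / m) ^ b * (L * c))) * (1 / Real.sqrt (τ - k)))
    · filter_upwards [hev] with z hz
      exact hAmeas z (by linarith [hz.1])
    · filter_upwards [hev] with z hz
      filter_upwards [ae_restrict_mem measurableSet_Ioo] with k hk
      exact hAbd z hz.1.le hz.2 k hk
    · exact hbdint
    · filter_upwards [ae_restrict_mem measurableSet_Ioo] with k hk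
      have hs : 0 < τ - k := by linarith [hk.2]
      have hyk := hypos k (hIcc k hk)
      exact tendsto_const_nhds.mul
        ((regk_tendsto hb0 hs hY0 hyk tendsto_const_nhds hid tendsto_const_nhds).add
        ((gk_tendsto hs hY0 hyk tendsto_const_nhds hid tendsto_const_nhds).mul tendsto_const_nhds))
  -- the singular part
  set w : ℝ → ℝ := fun s => y (τ - s) with hw
  set G : ℝ → ℝ → ℝ := fun z s => c * Ψ (τ - s) * (w s / z) ^ b with hG
  have hmaps : MapsTo (fun s => τ - s) (Ioo 0 τ) (Icc 0 T') := fun s hs =>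
    ⟨by linarith [hs.2], by linarith [hs.1, hτ.2]⟩
  have hcs : ContinuousOn (fun s : ℝ => τ - s) (Ioo 0 τ) := by fun_prop
  have hwc : ContinuousOn w (Ioo 0 τ) := hyc.comp hcs hmaps
  have hΨc : ContinuousOn (fun s => Ψ (τ - s)) (Ioo 0 τ) := hΨ.comp hcs hmaps
  have hwL : ∀ s ∈ Ioo 0 τ, |w s - Y| ≤ L * s := fun s hs => by
    have := hlip (τ - s) (hmaps hs) (by linarith [hs.1])
    rwa [sub_sub_cancel] at this
  have hGc : ∀ z, Y < z → ContinuousOn (G z) (Ioo 0 τ) := by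
    intro z hz
    refine (continuousOn_const.mul hΨc).mul ?_
    refine (hwc.div_const z).rpow_const ?_
    intro s hs
    exact Or.inl (div_pos (hypos _ (hmaps hs)) (by linarith)).ne'
  have hGb : ∀ z ∈ Ioc Y (Y + 1), ∀ s ∈ Ioo 0 τ, |G z s| ≤ c * K * (M / m) ^ b := by
    intro z hz s hs
    have hI := hmaps hs
    have h1 := hym _ hI
    have h2 := hyM _ hI
    have hz1 := hz.1
    have h3 : 0 ≤ w s / z := div_nonneg (hypos _ hI).le (by linarith)
    have h4 : (w s / z) ^ b ≤ (M / m) ^ b := by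
      apply Real.rpow_le_rpow h3 _ hb0.le
      apply div_le_div₀ <;> linarith
    rw [hG]
    simp only
    rw [abs_mul, abs_mul, abs_of_pos hc0, abs_of_nonneg (Real.rpow_nonneg h3 _)]
    apply mul_le_mul _ h4 (Real.rpow_nonneg h3 _) (by positivity)
    exact mul_le_mul_of_nonneg_left (hK _ hI) hc0.le
  have hGl : ∀ v, 0 < v → Tendsto (fun z => G z ((z - Y) ^ 2 * v)) (𝓝[>] Y) (𝓝 (c * Ψ τ)) := by
    intro v hv
    have hs0 : Tendsto (fun z => (z - Y) ^ 2 * v) (𝓝[>] Y) (𝓝 0) := by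
      have := ((hid.sub_const Y).pow 2).mul_const v
      simpa using this
    have ht : Tendsto (fun z => τ - (z - Y) ^ 2 * v) (𝓝[>] Y) (𝓝[Icc 0 T'] τ) := by
      rw [tendsto_nhdsWithin_iff]
      constructor
      · simpa using hs0.const_sub τ
      · filter_upwards [hs0.eventually_lt_const hτ0] with z hz
        have : 0 ≤ (z - Y) ^ 2 * v := by positivity
        exact ⟨by linarith, by linarith [hτ.2]⟩
    have l1 : Tendsto (fun z => Ψ (τ - (z - Y) ^ 2 * v)) (𝓝[>] Y) (𝓝 (Ψ τ)) :=
      Tendsto.comp (hΨ τ hτI) ht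
    have l2 : Tendsto (fun z => y (τ - (z - Y) ^ 2 * v)) (𝓝[>] Y) (𝓝 Y) :=
      Tendsto.comp (hyc τ hτI) ht
    have l3 : Tendsto (fun z => (y (τ - (z - Y) ^ 2 * v) / z) ^ b) (𝓝[>] Y) (𝓝 1) := by
      have := (l2.div hid hY0.ne').rpow_const (p := b) (Or.inl (div_pos hY0 hY0).ne')
      rwa [div_self hY0.ne', Real.one_rpow] at this
    have := (l1.const_mul c).mul l3
    rwa [mul_one] at this
  have hBeq : ∀ z s, B z (τ - s) = (z - Y) * s⁻¹ * (1 / Real.sqrt s) *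
      Real.exp (-(z - w s) ^ 2 / (2 * s)) * G z s := by
    intro z s
    rw [hB, hG, hw]
    simp only
    unfold gk
    rw [sub_sub_cancel]
    ring
  have hBI : ∀ z, ∫ k in Ioo 0 τ, B z k = ∫ s in Ioo 0 τ, (z - Y) * s⁻¹ * (1 / Real.sqrt s) *
      Real.exp (-(z - w s) ^ 2 / (2 * s)) * G z s := by
    intro z
    have := intervalIntegral.integral_comp_sub_left (a := 0) (b := τ) (B z) τ
    rw [sub_self, sub_zero] at this
    rw [← integral_Ioc_eq_integral_Ioo, ← intervalIntegral.integral_of_le hτ0.le, ← this,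
      intervalIntegral.integral_of_le hτ0.le, integral_Ioc_eq_integral_Ioo]
    simp_rw [hBeq]
  have hBint : ∀ z ∈ Ioc Y (Y + 1), IntegrableOn (B z) (Ioo 0 τ) := by
    intro z hz
    have h1 := jump_integrable hz.1 hwc hwL (hGc z hz.1) (hGb z hz)
    simp_rw [← hBeq] at h1
    rw [← intervalIntegrable_iff_integrableOn_Ioo_of_le hτ0.le] at h1
    have h2 := (h1.comp_sub_left τ).symm
    simp only [sub_self, sub_zero, sub_sub_cancel] at h2
    rwa [intervalIntegrable_iff_integrableOn_Ioo_of_le hτ0.le] at h2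
  have hBlim : Tendsto (fun z => ∫ k in Ioo 0 τ, B z k) (𝓝[>] Y) (𝓝 (Ψ τ)) := by
    simp_rw [hBI]
    have := jump_lemma hτ0 hL0 hwc hwL hGc hGb hGl
    have e : Real.sqrt (2 * Real.pi) * (c * Ψ τ) = Ψ τ := by rw [hc]; field_simp
    rwa [e] at this
  refine Tendsto.congr' ?_ (hBlim.add hAlim)
  filter_upwards [hev] with z hz
  rw [hq, intervalIntegral.integral_of_le hτ0.le, integral_Ioc_eq_integral_Ioo,
    setIntegral_congr_fun measurableSet_Ioo (hdec z (by linarith [hz.1])),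
    integral_add (hAint z hz.1.le hz.2) (hBint z hz), add_comm]
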